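/- arXiv:2411.07471 — 2 statements merged into one kernel-verified Lean document; each statement's English description precedes it below -/
import Mathlib

section
/- Let φ be a real number with 0 < φ < π/2 and set t = tan φ. Then the point A = (1/(1+t), t/(1+t)) lies on the unit taxicab circle (|1/(1+t)| + |t/(1+t)| = 1), A lies on the ray from the origin making Euclidean angle φ with the positive x-axis (i.e. A = s·(cos φ, sin φ) for some s > 0), and the taxicab distance from (1, 0) to A equals 2 − 2/(1 + t). Consequently, an acute Euclidean angle φ in standard position has taxicab measure 2 − 2/(1 + tan φ) t-radians. -/
noncomputable def taxiDist (P Q : ℝ × ℝ) : ℝ := |P.1 - Q.1| + |P.2 - Q.2|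

theorem acute_angle_taxicab_measure (φ : ℝ) (hφ0 : 0 < φ) (hφ : φ < Real.pi / 2) :
    |1 / (1 + Real.tan φ)| + |Real.tan φ / (1 + Real.tan φ)| = 1 ∧
    (∃ s : ℝ, 0 < s ∧
      ((1 / (1 + Real.tan φ), Real.tan φ / (1 + Real.tan φ)) : ℝ × ℝ) =
        (s * Real.cos φ, s * Real.sin φ)) ∧
    taxiDist ((1, 0) : ℝ × ℝ)
        ((1 / (1 + Real.tan φ), Real.tan φ / (1 + Real.tan φ)) : ℝ × ℝ) =
      2 - 2 / (1 + Real.tan φ) := by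
  have hc : 0 < Real.cos φ := Real.cos_pos_of_mem_Ioo ⟨by linarith, hφ⟩
  have ht : 0 < Real.tan φ := Real.tan_pos_of_pos_of_lt_pi_div_two hφ0 hφ
  have hs : Real.tan φ * Real.cos φ = Real.sin φ := Real.tan_mul_cos hc.ne'
  generalize Real.tan φ = t at *
  have h1 : 0 < 1 + t := by linarith
  have ha : 0 < 1 / (1 + t) := by positivity
  have hb : 0 < t / (1 + t) := by positivity
  have hab : 1 / (1 + t) + t / (1 + t) = 1 := by field_simp
  have h2 : 2 / (1 + t) = 2 * (1 / (1 + t)) := by ring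
  refine ⟨?_, ⟨1 / ((1 + t) * Real.cos φ), by positivity, ?_⟩, ?_⟩
  · rw [abs_of_pos ha, abs_of_pos hb, hab]
  · rw [← hs]
    ext
    · simp only
      field_simp
    · simp only
      field_simp
  · simp only [taxiDist]
    rw [abs_of_pos (by linarith), zero_sub, abs_neg, abs_of_pos hb, h2]
    linarith
end

section
/- (Proposition I.5T, case 2: base vertices in adjacent quadrants) Let r > 0 and let x₀, y₀, x₁, y₁ be reals with x₀ > 0, x₁ > 0, y₀ ≥ y₁ ≥ 0, x₁ ≥ x₀, x₀ + y₀ = r and x₁ + y₁ = r, and let P = (x₀, y₀) lie in the first quadrant and Q = (−x₁, y₁) in the second quadrant. Set α := 2/(1 + (y₀ − y₁)/(x₀ + x₁)) − 2/(1 + y₀/x₀) and β := 4 − 2/(1 + y₁/x₁) − 2/(1 + (y₀ − y₁)/(x₀ + x₁)) (the taxicab measures of the base angles ∠QPO and ∠PQO). Then α = β if and only if y₁ = 0 or x₀ = x₁; moreover x₀ = x₁ if and only if y₀ = y₁. -/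
theorem i5t_case2 (r x₀ y₀ x₁ y₁ : ℝ) (hr : 0 < r)
    (hx₀ : 0 < x₀) (hx₁ : 0 < x₁) (hy₁ : 0 ≤ y₁) (hy : y₁ ≤ y₀)
    (hx : x₀ ≤ x₁) (hQ : x₀ + y₀ = r) (hP : x₁ + y₁ = r) :
    ((2 / (1 + (y₀ - y₁) / (x₀ + x₁)) - 2 / (1 + y₀ / x₀) =
        4 - 2 / (1 + y₁ / x₁) - 2 / (1 + (y₀ - y₁) / (x₀ + x₁))) ↔
      (y₁ = 0 ∨ x₀ = x₁)) ∧
    (x₀ = x₁ ↔ y₀ = y₁) := by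
  have e1 : 2 / (1 + (y₀ - y₁) / (x₀ + x₁)) = (x₀ + x₁) / x₁ := by
    have h : y₀ - y₁ = x₁ - x₀ := by linarith
    have h2 : 1 + (y₀ - y₁) / (x₀ + x₁) = 2 * x₁ / (x₀ + x₁) := by
      rw [h]; field_simp; ring
    rw [h2]; field_simp
  have e2 : 2 / (1 + y₀ / x₀) = 2 * x₀ / r := by
    have h2 : 1 + y₀ / x₀ = r / x₀ := by rw [← hQ]; field_simp
    rw [h2]; field_simp
  have e3 : 2 / (1 + y₁ / x₁) = 2 * x₁ / r := by
    have h2 : 1 + y₁ / x₁ = r / x₁ := by rw [← hP]; field_simp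
    rw [h2]; field_simp
  have key : (x₀ + x₁) / x₁ - 2 * x₀ / r - (4 - 2 * x₁ / r - (x₀ + x₁) / x₁)
      = 2 * ((r - x₁) * (x₀ - x₁)) / (x₁ * r) := by
    field_simp; ring
  refine ⟨?_, ⟨fun h => by linarith, fun h => by linarith⟩⟩
  rw [e1, e2, e3, ← sub_eq_zero, key, div_eq_zero_iff]
  have hne : x₁ * r ≠ 0 := by positivity
  constructor
  · rintro (h | h)
    · have h' : (r - x₁) * (x₀ - x₁) = 0 := by linarith
      rcases mul_eq_zero.mp h' with h | h
      · left; linarith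
      · right; linarith
    · exact absurd h hne
  · rintro (h | h)
    · left
      have : r - x₁ = 0 := by linarith
      rw [this]; ring
    · left; rw [h]; ring
end
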